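/- For every subdivision H of the complete graph K_4, the cycle matroid M(H) is not a bicircular lift matroid. In particular, M(K_4) is not bicircular lift. -/

import Mathlib

/-!
For a graph `G` let `β_G X` be the cyclomatic number of the edge set `X`, the dimension of its cycle
space over `GF(2)`. A set is dependent in `M(H)` iff `1 ≤ β_H X`, and dependent in `L(G)` iff
`2 ≤ β_G X`. Hence, if `M(H) = L(G)`, then `β_G X ≥ 2` exactly when `β_H X ≥ 1`, and deleting edges
one at a time gives `β_G X ≤ β_H X + 1`. Two triangles `A` and `B` of `K₄` satisfy
`β_H (A ∪ B) = 2`, so supermodularity of `β_G` yields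
`β_G (A ∩ B) ≥ β_G A + β_G B - β_G (A ∪ B) ≥ 2 + 2 - 3 = 1`. The four triangles split into two pairs
whose intersections are two opposite edges `P` and `Q`, so `β_G (P ∪ Q) ≥ 2`, although `P ∪ Q` is a
forest of `H`. Subdividing an edge is an isomorphism of cycle spaces, so the same argument applies
to subdivisions of `K₄`.
-/

open Set Matroid

universe u

namespace BLFormal

/-! ### Matroid preliminaries -/

/-- A circuit of a matroid: a minimal dependent set. -/
def Circuit {α : Type u} (M : Matroid α) (C : Set α) : Prop := Minimal M.Dep C

/-- Deletion of a set of elements from a matroid. -/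
def del {α : Type u} (M : Matroid α) (D : Set α) : Matroid α := M ↾ (M.E \ D)

/-- Contraction of a set of elements of a matroid, defined by duality. -/
def con {α : Type u} (M : Matroid α) (C : Set α) : Matroid α := (del M✶ C)✶

/-- `N` is a minor of `M` if it is obtained by a contraction followed by a deletion. -/
def IsMinor {α : Type u} (N M : Matroid α) : Prop := ∃ C D : Set α, N = del (con M C) D

/-- `N` is a proper (strict) minor of `M`. -/
def IsStrictMinor {α : Type u} (N M : Matroid α) : Prop := IsMinor N M ∧ N ≠ M

/-- The rank of a set `X` in the matroid `M`, as an extended natural number: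
the supremum of the cardinalities of the independent subsets of `X`. -/
noncomputable def eRk {α : Type u} (M : Matroid α) (X : Set α) : ℕ∞ :=
  ⨆ I : {I : Set α // M.Indep I ∧ I ⊆ X}, (I : Set α).encard

/-- The rank `r(M)` of a matroid, as an extended natural number. -/
noncomputable def eRank {α : Type u} (M : Matroid α) : ℕ∞ := eRk M M.E

/-- A loop of a matroid. -/
def MLoop {α : Type u} (M : Matroid α) (e : α) : Prop := M.Dep {e}

/-- A coloop of a matroid: a loop of the dual. -/
def MColoop {α : Type u} (M : Matroid α) (e : α) : Prop := MLoop M✶ e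

/-- A `k`-separation of a matroid: a partition `(X, Y)` of the ground set with
`|X|, |Y| ≥ k` and `r(X) + r(Y) - r(M) ≤ k - 1`. -/
def IsKSep {α : Type u} (M : Matroid α) (k : ℕ) (X Y : Set α) : Prop :=
  X ∪ Y = M.E ∧ Disjoint X Y ∧ (k : ℕ∞) ≤ X.encard ∧ (k : ℕ∞) ≤ Y.encard ∧
    eRk M X + eRk M Y ≤ eRank M + ((k - 1 : ℕ) : ℕ∞)

/-- A matroid is connected if it has no 1-separation. -/
def MConnected {α : Type u} (M : Matroid α) : Prop := ¬ ∃ X Y, IsKSep M 1 X Y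

/-- A matroid is 3-connected if it is connected and has no 2-separation. -/
def ThreeConnected {α : Type u} (M : Matroid α) : Prop :=
  MConnected M ∧ ¬ ∃ X Y, IsKSep M 2 X Y

/-- Two elements of a matroid form a series pair if no circuit contains exactly one
of them, and some circuit contains both. -/
def SeriesPair {α : Type u} (M : Matroid α) (e f : α) : Prop :=
  (∀ C, Circuit M C → (e ∈ C ↔ f ∈ C)) ∧ ∃ C, Circuit M C ∧ e ∈ C ∧ f ∈ C

/-- A series class: a maximal set in which every two elements form a series pair. -/
def IsSeriesClass {α : Type u} (M : Matroid α) (S : Set α) : Prop :=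
  Maximal (fun T => T.Nonempty ∧ ∀ e ∈ T, ∀ f ∈ T, SeriesPair M e f) S

/-- `N` is a cosimplification `co(M)` of `M`: it is obtained from `M` by contracting
all coloops and, in each series class, all but one element. -/
def IsCosimplification {α : Type u} (M N : Matroid α) : Prop :=
  ∃ D ⊆ M.E, N = con M D ∧ (∀ e, MColoop M e → e ∈ D) ∧
    ∀ S, IsSeriesClass M S → ∃ x ∈ S, S \ D = {x}

/-- `M` is isomorphic to the uniform matroid `U_{k, n}`: the ground set has `n` elements
and the circuits are precisely the `(k+1)`-element subsets of the ground set. -/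
def IsUnif {α : Type u} (k n : ℕ) (M : Matroid α) : Prop :=
  M.E.encard = n ∧ ∀ C, Circuit M C ↔ C ⊆ M.E ∧ C.encard = k + 1

/-- `M` has a `U_{2,4}`-minor. -/
def HasU24Minor {α : Type u} (M : Matroid α) : Prop := ∃ N, IsMinor N M ∧ IsUnif 2 4 N

/-- `M` is isomorphic to the direct sum `U_{2,4} ⊕ U_{0,1}` of `U_{2,4}` and a loop:
its ground set consists of a 4-element set `X` together with one further element `l`,
and its circuits are `{l}` and the 3-element subsets of `X`. -/
def IsU24PlusLoop {α : Type u} (M : Matroid α) : Prop :=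
  ∃ (X : Set α) (l : α), l ∉ X ∧ M.E = insert l X ∧ X.encard = 4 ∧
    ∀ C, Circuit M C ↔ (C = {l} ∨ (C ⊆ X ∧ C.encard = 3))

/-- `M` is isomorphic to the Fano matroid `F₇`: the rank-3 matroid represented over
`GF(2)` by the seven nonzero vectors of `GF(2)³`. -/
def IsFano {α : Type u} (M : Matroid α) : Prop :=
  ∃ v : α → (Fin 3 → ZMod 2),
    Set.BijOn v M.E {w | w ≠ 0} ∧
    ∀ I ⊆ M.E, (M.Indep I ↔ LinearIndependent (ZMod 2) (fun x : I => v x))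

/-! ### Graphs (with loops and parallel edges allowed) -/

/-- A graph on vertex type `V`, with edge set `E` living in the ambient edge type `α`;
each edge is sent to the unordered pair of its end-vertices. -/
structure Graph (V : Type u) (α : Type u) where
  E : Set α
  inc : α → Sym2 V

namespace Graph

variable {V : Type u} {α : Type u}

/-- The vertices incident with an edge set `C`. -/
def vertsOf (G : Graph V α) (C : Set α) : Set V := {v | ∃ e ∈ C, v ∈ G.inc e}

/-- The vertex set of a graph (we consider graphs without isolated vertices). -/
def verts (G : Graph V α) : Set V := G.vertsOf G.E

/-- Deletion of a set of edges from a graph. -/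
def delete (G : Graph V α) (D : Set α) : Graph V α := ⟨G.E \ D, G.inc⟩

/-- The degree of a vertex `v` in the edge set `C`, with loops counting twice. -/
noncomputable def deg (G : Graph V α) (C : Set α) (v : V) : ℕ :=
  {e ∈ C | v ∈ G.inc e}.ncard + {e ∈ C | G.inc e = Sym2.diag v}.ncard

/-- Two vertices are adjacent via an edge of `C`. -/
def AdjOn (G : Graph V α) (C : Set α) (u v : V) : Prop := ∃ e ∈ C, G.inc e = s(u, v)

/-- The subgraph with edge set `C` is connected. -/
def ConnectedOn (G : Graph V α) (C : Set α) : Prop :=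
  ∀ u ∈ G.vertsOf C, ∀ v ∈ G.vertsOf C, Relation.ReflTransGen (G.AdjOn C) u v

/-- `C` is a cycle of `G` : the edge set of a connected 2-regular subgraph. -/
def IsCycle (G : Graph V α) (C : Set α) : Prop :=
  C ⊆ G.E ∧ C.Finite ∧ C.Nonempty ∧ (∀ v ∈ G.vertsOf C, G.deg C v = 2) ∧ G.ConnectedOn C

/-- A graph is 2-edge-connected if each of its edges lies in a cycle. -/
def TwoEdgeConnected (G : Graph V α) : Prop := ∀ e ∈ G.E, ∃ C, G.IsCycle C ∧ e ∈ C

/-- A graph is connected if it has at least one vertex and any two of its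
vertices are joined by a path. -/
def Connected (G : Graph V α) : Prop := G.verts.Nonempty ∧ G.ConnectedOn G.E

/-- Delete a vertex from a graph (removing all edges incident with it). -/
def delVert (G : Graph V α) (v : V) : Graph V α := ⟨{e ∈ G.E | v ∉ G.inc e}, G.inc⟩

/-- A graph is 2-connected if it is connected and stays connected after the
deletion of any vertex. -/
def TwoConnected (G : Graph V α) : Prop :=
  G.Connected ∧ ∀ v ∈ G.verts, (G.delVert v).Connected

/-- `X` contains at least two (distinct) cycles of `G`. -/
def HasTwoCycles (G : Graph V α) (X : Set α) : Prop :=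
  ∃ C₁ C₂, G.IsCycle C₁ ∧ G.IsCycle C₂ ∧ C₁ ≠ C₂ ∧ C₁ ⊆ X ∧ C₂ ⊆ X

/-- The circuits of the bicircular lift matroid of `G`: edge sets containing at
least two cycles and minimal with this property. -/
def LiftCircuit (G : Graph V α) (X : Set α) : Prop :=
  Minimal (fun Y => Y ⊆ G.E ∧ G.HasTwoCycles Y) X

/-- Two edges of a graph form a series pair if no cycle contains exactly one of
them, and some cycle contains both. -/
def SeriesPair (G : Graph V α) (e f : α) : Prop :=
  (∀ C, G.IsCycle C → (e ∈ C ↔ f ∈ C)) ∧ ∃ C, G.IsCycle C ∧ e ∈ C ∧ f ∈ C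

end Graph

/-- `N` is the bicircular lift matroid `L(G)` of `G` : its ground set is `E(G)`
and its circuits are the lift circuits of `G`. -/
def IsLiftRep {V α : Type u} (G : Graph V α) (N : Matroid α) : Prop :=
  N.E = G.E ∧ ∀ C, Circuit N C ↔ G.LiftCircuit C

/-- `N` is the cycle matroid `M(G)` of `G` : its ground set is `E(G)` and its
circuits are the cycles of `G`. -/
def IsGraphicRep {V α : Type u} (G : Graph V α) (N : Matroid α) : Prop :=
  N.E = G.E ∧ ∀ C, Circuit N C ↔ G.IsCycle C

/-- A matroid is bicircular lift if it is (isomorphic to) `L(G)` for some graph `G`. -/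
def IsBicircularLift {α : Type u} (N : Matroid α) : Prop :=
  ∃ (V : Type u) (G : Graph V α), IsLiftRep G N

/-- A matroid is graphic if it is (isomorphic to) the cycle matroid of some graph. -/
def IsGraphic {α : Type u} (N : Matroid α) : Prop :=
  ∃ (V : Type u) (G : Graph V α), IsGraphicRep G N

/-- The class `BL-bar` of matroids that are graphic or bicircular lift. -/
def InBL {α : Type u} (N : Matroid α) : Prop := IsGraphic N ∨ IsBicircularLift N

/-- `M` is an excluded minor for the class `BL-bar`. -/
def ExcludedMinorBL {α : Type u} (M : Matroid α) : Prop :=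
  ¬ InBL M ∧ ∀ N, IsStrictMinor N M → InBL N

/-! ### Special graphs and subdivisions -/

/-- `G` is (a copy of) the complete graph `K₄`. -/
def IsK4 {V α : Type u} (G : Graph V α) : Prop :=
  ∃ v : Fin 4 → V, Function.Injective v ∧
    ∃ ed : {p : Sym2 (Fin 4) // ¬ p.IsDiag} → α, Function.Injective ed ∧
      G.E = Set.range ed ∧ ∀ p, G.inc (ed p) = Sym2.map v p.1

/-- `G` is (a copy of) the complete graph `K₅`. -/
def IsK5 {V α : Type u} (G : Graph V α) : Prop :=
  ∃ v : Fin 5 → V, Function.Injective v ∧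
    ∃ ed : {p : Sym2 (Fin 5) // ¬ p.IsDiag} → α, Function.Injective ed ∧
      G.E = Set.range ed ∧ ∀ p, G.inc (ed p) = Sym2.map v p.1

/-- `G` is (a copy of) the complete bipartite graph `K₃,₃`. -/
def IsK33 {V α : Type u} (G : Graph V α) : Prop :=
  ∃ a b : Fin 3 → V, Function.Injective a ∧ Function.Injective b ∧
    Set.range a ∩ Set.range b = ∅ ∧
    ∃ ed : Fin 3 × Fin 3 → α, Function.Injective ed ∧
      G.E = Set.range ed ∧ ∀ p, G.inc (ed p) = s(a p.1, b p.2)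

/-- `G` is (a copy of) the graph `K₂ⁿ` with two vertices joined by `n` parallel edges. -/
def IsK2n {V α : Type u} (n : ℕ) (G : Graph V α) : Prop :=
  ∃ u v : V, u ≠ v ∧ ∃ ed : Fin n → α, Function.Injective ed ∧
    G.E = Set.range ed ∧ ∀ i, G.inc (ed i) = s(u, v)

/-- `H` is obtained from `G` by subdividing a single edge. -/
def ElemSub {V α : Type u} (G H : Graph V α) : Prop :=
  ∃ e ∈ G.E, ∃ (f g : α) (u v w : V),
    G.inc e = s(u, v) ∧ w ∉ G.verts ∧ f ≠ g ∧
    f ∉ G.E \ {e} ∧ g ∉ G.E \ {e} ∧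
    H.E = (G.E \ {e}) ∪ {f, g} ∧
    H.inc f = s(u, w) ∧ H.inc g = s(w, v) ∧
    ∀ x ∈ G.E \ {e}, H.inc x = G.inc x

/-- `H` is a subdivision of `G` : it is obtained from `G` by repeatedly
subdividing edges. -/
def IsSubdivision {V α : Type u} (G H : Graph V α) : Prop :=
  Relation.ReflTransGen ElemSub G H

/-! ### 2-sums and simplification -/

/-- `N` is the 2-sum `N₁ ⊕₂ᵉ N₂` of `N₁` and `N₂` along `e`. -/
def Is2Sum {α : Type u} (N N₁ N₂ : Matroid α) (e : α) : Prop :=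
  N₁.E ∩ N₂.E = {e} ∧
  ¬ MLoop N₁ e ∧ ¬ MColoop N₁ e ∧ ¬ MLoop N₂ e ∧ ¬ MColoop N₂ e ∧
  N.E = (N₁.E ∪ N₂.E) \ {e} ∧
  ∀ C, Circuit N C ↔
    ((Circuit N₁ C ∧ e ∉ C) ∨ (Circuit N₂ C ∧ e ∉ C) ∨
      ∃ C₁ C₂, Circuit N₁ C₁ ∧ Circuit N₂ C₂ ∧ e ∈ C₁ ∧ e ∈ C₂ ∧
        C = (C₁ \ {e}) ∪ (C₂ \ {e}))

/-- `H` is a simplification `si(G)` of `G` : it is obtained from `G` by deleting all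
loops and all but one edge of each parallel class. -/
def IsSimplification {V α : Type u} (G H : Graph V α) : Prop :=
  H.inc = G.inc ∧ H.E ⊆ G.E ∧ (∀ e ∈ H.E, ¬ (G.inc e).IsDiag) ∧
    ∀ e ∈ G.E, ¬ (G.inc e).IsDiag → ∃! f, f ∈ H.E ∧ G.inc f = G.inc e

/-- `H` is 2-connected, or is obtained from a 2-connected graph and a single edge `K₂`
by identifying one end-vertex of the edge with a vertex of the 2-connected graph. -/
def TwoConnOrPendant {V α : Type u} (H : Graph V α) : Prop :=
  H.TwoConnected ∨
    ∃ (e : α) (u w : V), e ∈ H.E ∧ H.inc e = s(u, w) ∧ u ≠ w ∧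
      (H.delete {e}).TwoConnected ∧ u ∈ (H.delete {e}).verts ∧ w ∉ (H.delete {e}).verts

lemma zmodTwo_eq_one_of_ne_zero : ∀ {c : ZMod 2}, c ≠ 0 → c = 1 := by decide

lemma finrank_supported_self {ι R : Type*} [Ring R] [StrongRankCondition R] (X : Set ι) :
    Module.finrank R (Finsupp.supported R R X) = X.ncard := by
  rw [(Finsupp.supportedEquivFinsupp X).finrank_eq, Module.finrank, rank_finsupp_self,
    Cardinal.toNat_lift]
  rfl

lemma finite_supported {ι R : Type*} [Ring R] {X : Set ι} (hX : X.Finite) :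
    Module.Finite R (Finsupp.supported R R X) :=
  have := hX.to_subtype
  Module.Finite.equiv (Finsupp.supportedEquivFinsupp X).symm

lemma exists_minimal_subset_of_finite {ι : Type*} {P : Set ι → Prop} {X : Set ι} (hX : X.Finite)
    (h : P X) : ∃ C ⊆ X, Minimal P C := by
  obtain ⟨C, hCX, hC⟩ := (hX.finite_subsets.subset (Set.sep_subset _ P)).exists_le_minimal
    (show X ∈ _ from ⟨subset_refl X, h⟩)
  exact ⟨C, hCX, hC.prop.2, fun D hD hDC => hC.2 ⟨hDC.trans hCX, hD⟩ hDC⟩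

namespace Graph

variable {V W α : Type u} {G : Graph V α} {H : Graph W α}

/-! ### Degrees and the boundary map -/

open Classical in
/-- The incidence vector of the edge `e`: its entry at `v` is the number of ends of `e` at `v`, so
a loop at `v` contributes two. It serves both degrees over `ℕ` and the boundary map over
`GF(2)`. -/
noncomputable def ends (G : Graph V α) (e : α) : V →₀ ℕ := (G.inc e).toMultiset.toFinsupp

lemma ends_eq_of_inc {e : α} {u v : V} (h : G.inc e = s(u, v)) :
    G.ends e = Finsupp.single u 1 + Finsupp.single v 1 := by
  classical
  ext w
  simp [ends, h, Sym2.toMultiset, List.count_cons, Finsupp.single_apply, add_comm]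

lemma ends_ne_zero_iff {e : α} {v : V} : G.ends e v ≠ 0 ↔ v ∈ G.inc e := by
  simp [ends]

lemma degree_ends (e : α) : (G.ends e).degree = 2 := by
  induction h : G.inc e with
  | h u v => simp [ends_eq_of_inc h]

open Classical in
lemma ends_apply (e : α) (v : V) :
    G.ends e v = (if v ∈ G.inc e then 1 else 0) + if G.inc e = Sym2.diag v then 1 else 0 := by
  induction h : G.inc e with
  | h a b =>
    have hdiag : s(a, b) = Sym2.diag v ↔ a = v ∧ b = v := by simp [Sym2.diag]
    simp only [ends_eq_of_inc h, Finsupp.add_apply, Finsupp.single_apply, Sym2.mem_iff, hdiag]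
    grind

lemma deg_eq_sum_ends (C : Finset α) (v : V) : G.deg C v = (∑ e ∈ C, G.ends e) v := by
  classical
  simp only [deg, Finsupp.finsetSum_apply, ends_apply, Finset.sum_add_distrib,
    ← Finset.card_filter, ← Set.ncard_coe_finset, Finset.coe_filter, Finset.mem_coe]

lemma support_sum_ends (C : Finset α) : ((∑ e ∈ C, G.ends e).support : Set V) = G.vertsOf C := by
  ext v
  simp [vertsOf, ends_ne_zero_iff, Finsupp.finsetSum_apply]

lemma finite_vertsOf {C : Set α} (hC : C.Finite) : (G.vertsOf C).Finite := by
  obtain ⟨C, rfl⟩ := hC.exists_finset_coe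
  exact support_sum_ends (G := G) C ▸ Finset.finite_toSet _

lemma vertsOf_mono {C D : Set α} (h : C ⊆ D) : G.vertsOf C ⊆ G.vertsOf D :=
  fun _ ⟨e, he, hv⟩ => ⟨e, h he, hv⟩

/-- The boundary map over `GF(2)`, sending an edge to the sum of its two ends; loops go to zero.
Its kernel is the cycle space. -/
noncomputable def boundary (G : Graph V α) : (α →₀ ZMod 2) →ₗ[ZMod 2] V →₀ ZMod 2 :=
  Finsupp.linearCombination (ZMod 2) fun e => (G.ends e).mapRange Nat.cast Nat.cast_zero

lemma boundary_apply (x : α →₀ ZMod 2) (v : V) :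
    G.boundary x v = ∑ e ∈ x.support, x e * (G.ends e v : ZMod 2) := by
  simp [boundary, Finsupp.linearCombination_apply, Finsupp.sum]

lemma boundary_single {e : α} {u v : V} (h : G.inc e = s(u, v)) :
    G.boundary (Finsupp.single e 1) = Finsupp.single u 1 + Finsupp.single v 1 := by
  classical
  ext w
  simp [boundary, ends_eq_of_inc h, Finsupp.single_apply]

lemma boundary_congr {G H : Graph V α} {x : α →₀ ZMod 2}
    (h : ∀ e ∈ x.support, G.inc e = H.inc e) : G.boundary x = H.boundary x := by
  ext v
  simp only [boundary_apply]
  refine Finset.sum_congr rfl fun e he => ?_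
  simp only [ends, h e he]

lemma degree_boundary (x : α →₀ ZMod 2) : (G.boundary x).degree = 0 := by
  induction x using Finsupp.induction_linear with
  | zero => simp
  | add x y hx hy => simp [hx, hy]
  | single e c =>
    obtain rfl | hc := eq_or_ne c 0
    · simp
    · rw [zmodTwo_eq_one_of_ne_zero hc]
      induction h : G.inc e with
      | h u v => simp [boundary_single h, CharTwo.add_self_eq_zero]

lemma boundary_apply_eq_deg (x : α →₀ ZMod 2) (v : V) :
    G.boundary x v = (G.deg (x.support : Set α) v : ZMod 2) := by
  rw [boundary_apply, deg_eq_sum_ends, Finsupp.finsetSum_apply, Nat.cast_sum]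
  refine Finset.sum_congr rfl fun e he => ?_
  rw [zmodTwo_eq_one_of_ne_zero (Finsupp.mem_support_iff.1 he), one_mul]

lemma support_boundary_subset (x : α →₀ ZMod 2) :
    ((G.boundary x).support : Set V) ⊆ G.vertsOf x.support := by
  intro v hv
  rw [Finset.mem_coe, Finsupp.mem_support_iff, boundary_apply] at hv
  obtain ⟨e, he, hne⟩ := Finset.exists_ne_zero_of_sum_ne_zero hv
  refine ⟨e, he, ends_ne_zero_iff.1 fun h0 => hne ?_⟩
  rw [h0, Nat.cast_zero, mul_zero]

/-! ### The cycle space -/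

/-- The cycle space of the edge set `X`: the vectors over `GF(2)` supported on `X` all of whose
degrees are even. The edges in `X` need not be edges of `G`. -/
noncomputable def cycleSpace (G : Graph V α) (X : Set α) : Submodule (ZMod 2) (α →₀ ZMod 2) :=
  LinearMap.ker G.boundary ⊓ Finsupp.supported (ZMod 2) (ZMod 2) X

lemma mem_cycleSpace {X : Set α} {x : α →₀ ZMod 2} :
    x ∈ G.cycleSpace X ↔ G.boundary x = 0 ∧ (x.support : Set α) ⊆ X := by
  simp [cycleSpace, Finsupp.mem_supported]

lemma cycleSpace_mono {X Y : Set α} (h : X ⊆ Y) : G.cycleSpace X ≤ G.cycleSpace Y :=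
  inf_le_inf_left _ (Finsupp.supported_mono h)

lemma cycleSpace_inter (X Y : Set α) :
    G.cycleSpace (X ∩ Y) = G.cycleSpace X ⊓ G.cycleSpace Y := by
  rw [cycleSpace, Finsupp.supported_inter, inf_inf_distrib_left, cycleSpace, cycleSpace]

lemma finiteDimensional_cycleSpace {X : Set α} (hX : X.Finite) :
    FiniteDimensional (ZMod 2) (G.cycleSpace X) :=
  have := finite_supported (R := ZMod 2) hX
  Submodule.finiteDimensional_of_le inf_le_right

/-- The cyclomatic number of the edge set `X`: the dimension of its cycle space. As a `finrank` it
is only meaningful for finite `X`. -/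
noncomputable def cyclomaticNumber (G : Graph V α) (X : Set α) : ℕ :=
  Module.finrank (ZMod 2) (G.cycleSpace X)

lemma cyclomaticNumber_pos {X : Set α} (hX : X.Finite) :
    0 < G.cyclomaticNumber X ↔ G.cycleSpace X ≠ ⊥ := by
  have := finiteDimensional_cycleSpace (G := G) hX
  rw [cyclomaticNumber, Nat.pos_iff_ne_zero, Ne, Submodule.finrank_eq_zero]

lemma cyclomaticNumber_eq_zero {X : Set α} (hX : X.Finite) :
    G.cyclomaticNumber X = 0 ↔ G.cycleSpace X = ⊥ := by
  have := finiteDimensional_cycleSpace (G := G) hX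
  rw [cyclomaticNumber, Submodule.finrank_eq_zero]

lemma cyclomaticNumber_empty : G.cyclomaticNumber ∅ = 0 := by
  rw [cyclomaticNumber_eq_zero Set.finite_empty, cycleSpace, Finsupp.supported_empty, inf_bot_eq]

lemma cyclomaticNumber_add_le {X Y : Set α} (hX : X.Finite) (hY : Y.Finite) :
    G.cyclomaticNumber X + G.cyclomaticNumber Y ≤
      G.cyclomaticNumber (X ∪ Y) + G.cyclomaticNumber (X ∩ Y) := by
  have := finiteDimensional_cycleSpace (G := G) hX
  have := finiteDimensional_cycleSpace (G := G) hY
  have := finiteDimensional_cycleSpace (G := G) (hX.union hY)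
  rw [cyclomaticNumber, cyclomaticNumber, ← Submodule.finrank_sup_add_finrank_inf_eq,
    ← cycleSpace_inter, ← cyclomaticNumber]
  gcongr
  exact Submodule.finrank_mono (sup_le (cycleSpace_mono subset_union_left)
    (cycleSpace_mono subset_union_right))

lemma cyclomaticNumber_le_add_ncard {X F : Set α} (hX : X.Finite) (hF : F.Finite) :
    G.cyclomaticNumber X ≤ G.cyclomaticNumber (X \ F) + F.ncard := by
  have := finiteDimensional_cycleSpace (G := G) hX
  have := finiteDimensional_cycleSpace (G := G) (hX.sdiff (t := F))
  have := hF.fintype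
  let restrict : G.cycleSpace X →ₗ[ZMod 2] F → ZMod 2 :=
    (LinearMap.pi fun e : F => Finsupp.lapply e.1) ∘ₗ (G.cycleSpace X).subtype
  have hker : (LinearMap.ker restrict).map (G.cycleSpace X).subtype ≤ G.cycleSpace (X \ F) := by
    rintro _ ⟨⟨x, hx⟩, hx0, rfl⟩
    rw [mem_cycleSpace] at hx
    refine mem_cycleSpace.2 ⟨hx.1, fun e he => ⟨hx.2 he, fun heF => ?_⟩⟩
    exact Finsupp.mem_support_iff.1 he (congrFun hx0 ⟨e, heF⟩)
  have hrange : Module.finrank (ZMod 2) (LinearMap.range restrict) ≤ F.ncard := by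
    rw [Set.ncard_eq_toFinset_card', Set.toFinset_card,
      ← Module.finrank_fintype_fun_eq_card (ZMod 2)]
    exact Submodule.finrank_le _
  calc G.cyclomaticNumber X
      = Module.finrank (ZMod 2) (LinearMap.ker restrict) +
          Module.finrank (ZMod 2) (LinearMap.range restrict) := by
        rw [add_comm, LinearMap.finrank_range_add_finrank_ker, cyclomaticNumber]
    _ ≤ G.cyclomaticNumber (X \ F) + F.ncard := by
        gcongr
        rw [← Submodule.finrank_map_subtype_eq]
        exact Submodule.finrank_mono hker

lemma cycleSpace_eq_bot_of_forall_leaf {X : Set α}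
    (h : ∀ e ∈ X, ∃ u v, G.inc e = s(u, v) ∧ u ≠ v ∧ ∀ f ∈ X, v ∈ G.inc f → f = e) :
    G.cycleSpace X = ⊥ := by
  refine (Submodule.eq_bot_iff _).2 fun x hx => ?_
  rw [mem_cycleSpace] at hx
  ext e
  by_contra he
  have hesupp := Finsupp.mem_support_iff.2 he
  obtain ⟨u, v, hinc, huv, hleaf⟩ := h e (hx.2 hesupp)
  have hv : G.boundary x v = x e := by
    rw [boundary_apply, Finset.sum_eq_single_of_mem e hesupp]
    · simp [ends_eq_of_inc hinc, huv]
    · intro f hf hfe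
      have hvf : G.ends f v = 0 :=
        not_not.1 (ends_ne_zero_iff.not.2 fun hvf => hfe (hleaf f (hx.2 hf) hvf))
      rw [hvf, Nat.cast_zero, mul_zero]
  exact he (by rw [← hv, hx.1]; rfl)

/-- The boundary map embeds the span of `C` into the span of `W`, and misses every single vertex
because boundaries have degree zero. -/
lemma ncard_lt_ncard_of_cycleSpace_eq_bot {C : Set α} {W : Set V} (hW : W.Finite)
    (hWne : W.Nonempty) (hCW : G.vertsOf C ⊆ W) (h : G.cycleSpace C = ⊥) :
    C.ncard < W.ncard := by
  have := finite_supported (R := ZMod 2) hW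
  obtain ⟨w, hw⟩ := hWne
  have hlt : (Finsupp.supported (ZMod 2) (ZMod 2) C).map G.boundary <
      Finsupp.supported (ZMod 2) (ZMod 2) W := by
    refine SetLike.lt_iff_le_and_exists.2 ⟨?_, Finsupp.single w 1,
      Finsupp.single_mem_supported _ _ hw, ?_⟩
    · rintro _ ⟨x, hx, rfl⟩
      exact (support_boundary_subset x).trans ((vertsOf_mono hx).trans hCW)
    · rintro ⟨x, -, hx⟩
      simpa [hx] using degree_boundary (G := G) x
  have hinj : Function.Injective (G.boundary.domRestrict (Finsupp.supported (ZMod 2) (ZMod 2) C)) :=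
    LinearMap.injective_domRestrict_iff.2 (disjoint_iff.2 h).symm
  rw [← finrank_supported_self (R := ZMod 2) C, ← finrank_supported_self (R := ZMod 2) W,
    ← LinearMap.finrank_range_of_inj hinj, LinearMap.range_domRestrict]
  exact Submodule.finrank_lt_finrank_of_lt hlt

/-! ### Cycles are the minimal supports of the cycle space -/

lemma exists_mem_cycleSpace_ne_zero {X : Set α} (h : G.cycleSpace X ≠ ⊥) :
    ∃ x, G.boundary x = 0 ∧ (x.support : Set α) ⊆ X ∧ x ≠ 0 := by
  obtain ⟨x, hx, hx0⟩ := Submodule.exists_mem_ne_zero_of_ne_bot h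
  exact ⟨x, (mem_cycleSpace.1 hx).1, (mem_cycleSpace.1 hx).2, hx0⟩

lemma cycleSpace_support_ne_bot {x : α →₀ ZMod 2} (hx : G.boundary x = 0) (hx0 : x ≠ 0) :
    G.cycleSpace x.support ≠ ⊥ :=
  fun h => hx0 ((Submodule.eq_bot_iff _).1 h x (mem_cycleSpace.2 ⟨hx, subset_rfl⟩))

lemma support_eq_of_minimal_cycleSpace_ne_bot {C : Set α}
    (hC : Minimal (fun D => G.cycleSpace D ≠ ⊥) C) {x : α →₀ ZMod 2}
    (hx : G.boundary x = 0) (hxC : (x.support : Set α) ⊆ C) (hx0 : x ≠ 0) : x.support = C :=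
  hC.eq_of_subset (cycleSpace_support_ne_bot hx hx0) hxC

lemma exists_minimal_cycleSpace_ne_bot {X : Set α} (h : G.cycleSpace X ≠ ⊥) :
    ∃ C ⊆ X, Minimal (fun D => G.cycleSpace D ≠ ⊥) C := by
  obtain ⟨x, hx, hxX, hx0⟩ := exists_mem_cycleSpace_ne_zero h
  obtain ⟨C, hCx, hC⟩ := exists_minimal_subset_of_finite x.support.finite_toSet
    (P := fun D => G.cycleSpace D ≠ ⊥) (cycleSpace_support_ne_bot hx hx0)
  exact ⟨C, hCx.trans hxX, hC⟩

lemma deg_pos_iff {C : Finset α} {v : V} : 0 < G.deg C v ↔ v ∈ G.vertsOf C := by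
  rw [← support_sum_ends, Finset.mem_coe, Finsupp.mem_support_iff, deg_eq_sum_ends,
    Nat.pos_iff_ne_zero]

lemma sum_deg_eq_two_mul_card (C : Finset α) :
    ∑ v ∈ (finite_vertsOf (G := G) C.finite_toSet).toFinset, G.deg C v = 2 * C.card := by
  have hsupp : (finite_vertsOf (G := G) C.finite_toSet).toFinset = (∑ e ∈ C, G.ends e).support := by
    ext v
    rw [Set.Finite.mem_toFinset, ← support_sum_ends, Finset.mem_coe]
  simp only [deg_eq_sum_ends, hsupp]
  rw [← Finsupp.degree_apply, map_sum, Finset.sum_congr rfl fun e _ => degree_ends e,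
    Finset.sum_const, smul_eq_mul, mul_comm]

lemma even_deg_support {x : α →₀ ZMod 2} (hx : G.boundary x = 0) (v : V) :
    Even (G.deg x.support v) := by
  rw [← ZMod.natCast_eq_zero_iff_even, ← boundary_apply_eq_deg, hx, Finsupp.zero_apply]

/-- A handshake count: all degrees are at least two, while deleting one edge leaves a forest, so
that there are at most as many edges as vertices. -/
lemma deg_eq_two_of_minimal_cycleSpace_ne_bot {C : Set α}
    (hC : Minimal (fun D => G.cycleSpace D ≠ ⊥) C) {v : V} (hv : v ∈ G.vertsOf C) :
    G.deg C v = 2 := by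
  obtain ⟨x, hx, hxC, hx0⟩ := exists_mem_cycleSpace_ne_zero hC.prop
  obtain rfl := support_eq_of_minimal_cycleSpace_ne_bot hC hx hxC hx0
  set W := (finite_vertsOf (G := G) x.support.finite_toSet).toFinset with hW
  have hmemW {w : V} : w ∈ W ↔ w ∈ G.vertsOf x.support := Set.Finite.mem_toFinset _
  have htwo_le : ∀ w ∈ W, 2 ≤ G.deg x.support w := fun w hw => by
    have := deg_pos_iff.2 (hmemW.1 hw)
    obtain ⟨k, hk⟩ := even_deg_support hx w
    omega
  obtain ⟨e, he⟩ := Finsupp.support_nonempty_iff.2 hx0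
  have hforest : G.cycleSpace (x.support \ {e}) = ⊥ :=
    not_not.1 (hC.not_prop_of_ssubset (Set.sdiff_singleton_ssubset.2 he))
  have hcard : x.support.card ≤ W.card := by
    have := ncard_lt_ncard_of_cycleSpace_eq_bot W.finite_toSet ⟨v, hmemW.2 hv⟩
      (fun w hw => hmemW.2 (vertsOf_mono Set.sdiff_subset hw)) hforest
    rw [Set.ncard_sdiff_singleton_of_mem he, Set.ncard_coe_finset, Set.ncard_coe_finset] at this
    omega
  have hsum : ∑ w ∈ W, 2 = ∑ w ∈ W, G.deg x.support w := by
    refine (Finset.sum_le_sum htwo_le).antisymm ?_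
    rw [hW, sum_deg_eq_two_mul_card, Finset.sum_const, smul_eq_mul, ← hW]
    omega
  exact ((Finset.sum_eq_sum_iff_of_le htwo_le).1 hsum v (hmemW.2 hv)).symm

open Classical in
lemma boundary_filter_eq_zero {x : α →₀ ZMod 2} (hx : G.boundary x = 0) {S : Set V}
    (hS : ∀ e ∈ x.support, ∀ u ∈ G.inc e, u ∈ S → ∀ v ∈ G.inc e, v ∈ S) :
    G.boundary (x.filter fun e => ∃ u ∈ G.inc e, u ∈ S) = 0 := by
  ext v
  have hterm : ∀ e ∈ x.support,
      (if ∃ u ∈ G.inc e, u ∈ S then x e * (G.ends e v : ZMod 2) else 0) =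
        if v ∈ S then x e * (G.ends e v : ZMod 2) else 0 := fun e he => by
    by_cases hve : v ∈ G.inc e
    · have : (∃ u ∈ G.inc e, u ∈ S) ↔ v ∈ S :=
        ⟨fun ⟨u, hu, huS⟩ => hS e he u hu huS v hve, fun hvS => ⟨v, hve, hvS⟩⟩
      simp only [this]
    · simp [not_not.1 (mt ends_ne_zero_iff.1 hve)]
  calc G.boundary (x.filter fun e => ∃ u ∈ G.inc e, u ∈ S) v
      = ∑ e ∈ x.support,
          if ∃ u ∈ G.inc e, u ∈ S then x e * (G.ends e v : ZMod 2) else 0 := by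
        rw [boundary_apply, Finsupp.support_filter, Finset.sum_filter]
        refine Finset.sum_congr rfl fun e _ => ?_
        split_ifs with h
        · rw [Finsupp.filter_apply_pos (fun e => ∃ u ∈ G.inc e, u ∈ S) x h]
        · rfl
    _ = if v ∈ S then G.boundary x v else 0 := by
        rw [Finset.sum_congr rfl hterm, boundary_apply]
        split_ifs <;> simp
    _ = 0 := by simp [hx]

lemma connectedOn_of_minimal_cycleSpace_ne_bot {C : Set α}
    (hC : Minimal (fun D => G.cycleSpace D ≠ ⊥) C) : G.ConnectedOn C := by
  classical
  obtain ⟨x, hx, hxC, hx0⟩ := exists_mem_cycleSpace_ne_zero hC.prop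
  obtain rfl := support_eq_of_minimal_cycleSpace_ne_bot hC hx hxC hx0
  rintro u ⟨e, he, hue⟩ v ⟨f, hf, hvf⟩
  let S : Set V := {w | Relation.ReflTransGen (G.AdjOn x.support) u w}
  have hS : ∀ d ∈ x.support, ∀ a ∈ G.inc d, a ∈ S → ∀ b ∈ G.inc d, b ∈ S := by
    intro d hd a ha haS b hb
    obtain rfl | hab := eq_or_ne a b
    · exact haS
    · exact haS.tail ⟨d, hd, (Sym2.mem_and_mem_iff hab).1 ⟨ha, hb⟩⟩
  have hfilter := support_eq_of_minimal_cycleSpace_ne_bot hC (boundary_filter_eq_zero hx hS)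
    (Finset.coe_subset.2 (Finset.filter_subset _ _)) fun h0 => by
      have : e ∉ (x.filter fun e => ∃ u ∈ G.inc e, u ∈ S).support := by simp [h0]
      exact this (Finset.mem_filter.2 ⟨he, u, hue, .refl⟩)
  obtain ⟨-, w, hwf, hwS⟩ := Finset.mem_filter.1 (Finset.coe_injective hfilter ▸ hf)
  exact hS f hf w hwf hwS v hvf

lemma isCycle_of_minimal_cycleSpace_ne_bot {C : Set α} (hCE : C ⊆ G.E)
    (hC : Minimal (fun D => G.cycleSpace D ≠ ⊥) C) : G.IsCycle C := by
  obtain ⟨x, hx, hxC, hx0⟩ := exists_mem_cycleSpace_ne_zero hC.prop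
  have hsupp := support_eq_of_minimal_cycleSpace_ne_bot hC hx hxC hx0
  refine ⟨hCE, hsupp ▸ x.support.finite_toSet, ?_, fun v hv =>
    deg_eq_two_of_minimal_cycleSpace_ne_bot hC hv, connectedOn_of_minimal_cycleSpace_ne_bot hC⟩
  exact hsupp ▸ Finsupp.support_nonempty_iff.2 hx0

lemma exists_isCycle_of_cycleSpace_ne_bot {X : Set α} (hX : X ⊆ G.E) (h : G.cycleSpace X ≠ ⊥) :
    ∃ C ⊆ X, G.IsCycle C := by
  obtain ⟨C, hCX, hC⟩ := exists_minimal_cycleSpace_ne_bot h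
  exact ⟨C, hCX, isCycle_of_minimal_cycleSpace_ne_bot (hCX.trans hX) hC⟩

lemma IsCycle.exists_support_eq {C : Set α} (hC : G.IsCycle C) :
    ∃ x, G.boundary x = 0 ∧ (x.support : Set α) = C ∧ x ≠ 0 := by
  classical
  obtain ⟨-, hfin, hne, hdeg, -⟩ := hC
  obtain ⟨C, rfl⟩ := hfin.exists_finset_coe
  let x : α →₀ ZMod 2 := Finsupp.indicator C fun _ _ => 1
  have hx : x.support = C := by
    ext e
    simp [x, Finsupp.indicator_apply]
  refine ⟨x, ?_, congrArg _ hx, Finsupp.support_nonempty_iff.1 (hx ▸ Finset.coe_nonempty.1 hne)⟩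
  ext v
  rw [boundary_apply_eq_deg, hx, Finsupp.zero_apply]
  by_cases hv : v ∈ G.vertsOf C
  · rw [hdeg v hv, Nat.cast_two]
    exact CharTwo.two_eq_zero
  · rw [Nat.eq_zero_of_not_pos (mt deg_pos_iff.1 hv), Nat.cast_zero]

lemma IsCycle.cycleSpace_ne_bot {C X : Set α} (hC : G.IsCycle C) (hCX : C ⊆ X) :
    G.cycleSpace X ≠ ⊥ := by
  obtain ⟨x, hx, rfl, hx0⟩ := hC.exists_support_eq
  exact ne_bot_of_le_ne_bot (cycleSpace_support_ne_bot hx hx0) (cycleSpace_mono hCX)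

lemma hasTwoCycles_iff_two_le_cyclomaticNumber {X : Set α} (hXE : X ⊆ G.E) (hX : X.Finite) :
    G.HasTwoCycles X ↔ 2 ≤ G.cyclomaticNumber X := by
  have := finiteDimensional_cycleSpace (G := G) hX
  constructor
  · rintro ⟨C₁, C₂, hC₁, hC₂, hne, h₁, h₂⟩
    obtain ⟨x₁, hx₁, rfl, hx₁0⟩ := hC₁.exists_support_eq
    obtain ⟨x₂, hx₂, rfl, hx₂0⟩ := hC₂.exists_support_eq
    by_contra! hlt
    obtain ⟨z, hz⟩ := finrank_le_one_iff.1 (Nat.le_of_lt_succ hlt)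
    have hunique : ∀ x, G.boundary x = 0 → (x.support : Set α) ⊆ X → x ≠ 0 → x = z := by
      intro x hx hxX hx0
      obtain ⟨c, hc⟩ := hz ⟨x, mem_cycleSpace.2 ⟨hx, hxX⟩⟩
      have hcx : c • (z : α →₀ ZMod 2) = x := congrArg Subtype.val hc
      have hc0 : c ≠ 0 := by
        rintro rfl
        exact hx0 (by rw [← hcx, zero_smul])
      rw [← hcx, zmodTwo_eq_one_of_ne_zero hc0, one_smul]
    exact hne (by rw [hunique x₁ hx₁ h₁ hx₁0, hunique x₂ hx₂ h₂ hx₂0])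
  · intro h
    obtain ⟨C₁, h₁, hC₁⟩ := exists_isCycle_of_cycleSpace_ne_bot hXE
      ((cyclomaticNumber_pos hX).1 (by omega))
    obtain ⟨e, he⟩ := hC₁.2.2.1
    have hpos : 0 < G.cyclomaticNumber (X \ {e}) := by
      have := cyclomaticNumber_le_add_ncard (G := G) hX (Set.finite_singleton e)
      rw [Set.ncard_singleton] at this
      omega
    obtain ⟨C₂, h₂, hC₂⟩ := exists_isCycle_of_cycleSpace_ne_bot
      (Set.sdiff_subset.trans hXE) ((cyclomaticNumber_pos hX.sdiff).1 hpos)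
    exact ⟨C₁, C₂, hC₁, hC₂, fun h => (h₂ (h ▸ he)).2 rfl, h₁, h₂.trans Set.sdiff_subset⟩

lemma exists_cyclomaticNumber_sdiff_singleton_lt {X : Set α} (hX : X.Finite)
    (h : 0 < G.cyclomaticNumber X) : ∃ e, G.cyclomaticNumber (X \ {e}) < G.cyclomaticNumber X := by
  have := finiteDimensional_cycleSpace (G := G) hX
  obtain ⟨x, hx, hxX, hx0⟩ := exists_mem_cycleSpace_ne_zero ((cyclomaticNumber_pos hX).1 h)
  obtain ⟨e, he⟩ := Finsupp.support_nonempty_iff.2 hx0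
  refine ⟨e, Submodule.finrank_lt_finrank_of_lt (SetLike.lt_iff_le_and_exists.2
    ⟨cycleSpace_mono Set.sdiff_subset, x, mem_cycleSpace.2 ⟨hx, hxX⟩, fun hmem => ?_⟩)⟩
  exact ((mem_cycleSpace.1 hmem).2 he).2 rfl

end Graph

/-! ### Dependent sets of cycle matroids and bicircular lift matroids -/

section Representations

variable {V W α : Type u} {G : Graph V α} {H : Graph W α} {N : Matroid α} {X : Set α}

lemma IsGraphicRep.dep_iff (hN : IsGraphicRep H N) (hX : X ⊆ N.E) :
    N.Dep X ↔ H.cycleSpace X ≠ ⊥ := by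
  constructor
  · intro hdep
    obtain ⟨C, hCX, hC⟩ := hdep.exists_isCircuit_subset
    exact ((hN.2 C).1 hC).cycleSpace_ne_bot hCX
  · intro h
    obtain ⟨C, hCX, hC⟩ := Graph.exists_isCycle_of_cycleSpace_ne_bot (hN.1 ▸ hX) h
    exact ((hN.2 C).2 hC).prop.superset hCX

lemma IsLiftRep.dep_iff (hN : IsLiftRep G N) (hX : X ⊆ N.E) : N.Dep X ↔ G.HasTwoCycles X := by
  constructor
  · intro hdep
    obtain ⟨C, hCX, hC⟩ := hdep.exists_isCircuit_subset
    obtain ⟨-, C₁, C₂, h₁, h₂, hne, h₁C, h₂C⟩ := ((hN.2 C).1 hC).prop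
    exact ⟨C₁, C₂, h₁, h₂, hne, h₁C.trans hCX, h₂C.trans hCX⟩
  · rintro ⟨C₁, C₂, h₁, h₂, hne, h₁X, h₂X⟩
    obtain ⟨C, hC, hmin⟩ := exists_minimal_subset_of_finite (h₁.2.1.union h₂.2.1)
      (P := fun Y => Y ⊆ G.E ∧ G.HasTwoCycles Y)
      ⟨Set.union_subset h₁.1 h₂.1, C₁, C₂, h₁, h₂, hne, subset_union_left, subset_union_right⟩
    exact ((hN.2 C).2 hmin).prop.superset (hC.trans (Set.union_subset h₁X h₂X))

lemma two_le_cyclomaticNumber_iff_pos (hH : IsGraphicRep H N) (hG : IsLiftRep G N) (hX : X.Finite)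
    (hXN : X ⊆ N.E) : 2 ≤ G.cyclomaticNumber X ↔ 0 < H.cyclomaticNumber X := by
  rw [← Graph.hasTwoCycles_iff_two_le_cyclomaticNumber (hG.1 ▸ hXN) hX, ← hG.dep_iff hXN,
    hH.dep_iff hXN, Graph.cyclomaticNumber_pos hX]

lemma cyclomaticNumber_le_add_one (hH : IsGraphicRep H N) (hG : IsLiftRep G N) (hX : X.Finite)
    (hXN : X ⊆ N.E) : G.cyclomaticNumber X ≤ H.cyclomaticNumber X + 1 := by
  induction hn : H.cyclomaticNumber X using Nat.strong_induction_on generalizing X with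
  | h n ih =>
    subst hn
    have hdep := two_le_cyclomaticNumber_iff_pos hH hG hX hXN
    obtain h0 | hpos := Nat.eq_zero_or_pos (H.cyclomaticNumber X)
    · omega
    · obtain ⟨e, he⟩ := Graph.exists_cyclomaticNumber_sdiff_singleton_lt hX hpos
      have hdelete := Graph.cyclomaticNumber_le_add_ncard (G := G) hX (Set.finite_singleton e)
      rw [Set.ncard_singleton] at hdelete
      have := ih _ he hX.sdiff (Set.sdiff_subset.trans hXN) rfl
      omega

end Representations

/-! ### Opposed theta pairs -/

namespace Graph

variable {V W α : Type u} {G : Graph V α} {H : Graph W α}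

/-- A pair of edge sets that behaves like two cycles in a common theta subgraph: neither of them
is a forest, and together they have cyclomatic number at most two. -/
structure IsThetaPair (G : Graph V α) (A B : Set α) : Prop where
  left_subset : A ⊆ G.E
  right_subset : B ⊆ G.E
  left_pos : 0 < G.cyclomaticNumber A
  right_pos : 0 < G.cyclomaticNumber B
  union_le : G.cyclomaticNumber (A ∪ B) ≤ 2

/-- Two theta pairs whose intersections are disjoint and span a forest. In `K₄` the four
triangles, split into two pairs, are of this kind: the two intersections are opposite edges. -/
def HasOpposedThetaPairs (G : Graph V α) : Prop :=
  ∃ A B C D, G.IsThetaPair A B ∧ G.IsThetaPair C D ∧ Disjoint (A ∩ B) (C ∩ D) ∧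
    G.cyclomaticNumber (A ∩ B ∪ C ∩ D) = 0

/-- In a lift representation both sets contain two cycles and their union has cyclomatic number at
most three, so supermodularity leaves a cycle for the intersection. -/
lemma IsThetaPair.cyclomaticNumber_inter_pos {N : Matroid α} {A B : Set α}
    (h : H.IsThetaPair A B) (hE : H.E.Finite) (hH : IsGraphicRep H N) (hG : IsLiftRep G N) :
    0 < G.cyclomaticNumber (A ∩ B) := by
  have hA := hE.subset h.left_subset
  have hB := hE.subset h.right_subset
  have hAN := hH.1 ▸ h.left_subset
  have hBN := hH.1 ▸ h.right_subset
  have htwoA := (two_le_cyclomaticNumber_iff_pos hH hG hA hAN).2 h.left_pos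
  have htwoB := (two_le_cyclomaticNumber_iff_pos hH hG hB hBN).2 h.right_pos
  have hunion := cyclomaticNumber_le_add_one hH hG (hA.union hB) (Set.union_subset hAN hBN)
  have hsuper := cyclomaticNumber_add_le (G := G) hA hB
  have := h.union_le
  omega

theorem HasOpposedThetaPairs.not_isBicircularLift {N : Matroid α} (h : H.HasOpposedThetaPairs)
    (hE : H.E.Finite) (hH : IsGraphicRep H N) : ¬ IsBicircularLift N := by
  rintro ⟨W, G, hG⟩
  obtain ⟨A, B, C, D, hAB, hCD, hdisj, hforest⟩ := h
  have hP : A ∩ B ⊆ H.E := Set.inter_subset_left.trans hAB.left_subset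
  have hQ : C ∩ D ⊆ H.E := Set.inter_subset_left.trans hCD.left_subset
  have hPpos := hAB.cyclomaticNumber_inter_pos hE hH hG
  have hQpos := hCD.cyclomaticNumber_inter_pos hE hH hG
  have hsuper := cyclomaticNumber_add_le (G := G) (hE.subset hP) (hE.subset hQ)
  rw [hdisj.inter_eq, cyclomaticNumber_empty] at hsuper
  have hunion := two_le_cyclomaticNumber_iff_pos hH hG (hE.subset (Set.union_subset hP hQ))
    (hH.1 ▸ Set.union_subset hP hQ)
  omega

/-! ### Subdivisions -/

lemma apply_eq_of_series {X : Set α} {f g : α} {u v w : V} (hfg : f ≠ g) (hf : G.inc f = s(u, w))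
    (hg : G.inc g = s(w, v)) (hu : u ≠ w) (hv : v ≠ w) (hw : w ∉ G.vertsOf (X \ {f, g}))
    {x : α →₀ ZMod 2} (hx : x ∈ G.cycleSpace X) : x f = x g := by
  classical
  rw [mem_cycleSpace] at hx
  set y := (x.erase f).erase g with hy
  have hyw : G.boundary y w = 0 := by
    by_contra hne
    refine hw (vertsOf_mono ?_ (support_boundary_subset y (Finsupp.mem_support_iff.2 hne)))
    intro a ha
    simp only [hy, Finsupp.support_erase, Finset.coe_erase] at ha
    obtain ⟨⟨hax, haf⟩, hag⟩ := ha
    exact ⟨hx.2 hax, not_or.2 ⟨haf, hag⟩⟩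
  have hdecomp : x = y + x f • Finsupp.single f 1 + x g • Finsupp.single g 1 := by
    ext a
    simp only [hy, Finsupp.add_apply, Finsupp.smul_apply, Finsupp.single_apply, Finsupp.erase_apply,
      smul_eq_mul]
    grind
  have hsum : x f + x g = 0 := by
    have := DFunLike.congr_fun hx.1 w
    rw [hdecomp, map_add, map_add, map_smul, map_smul, boundary_single hf,
      boundary_single hg] at this
    simpa [hyw, hu, hv] using this
  exact CharTwo.add_eq_zero.1 hsum

/-- `ElemSub G H` with its data named: the edge `e = uv` of `G` is replaced in `H` by the path with
edges `f = uw` and `g = wv` through a new vertex `w`. -/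
structure SubdividesAt (G H : Graph V α) (e f g : α) (u v w : V) : Prop where
  mem : e ∈ G.E
  inc_eq : G.inc e = s(u, v)
  notMem_verts : w ∉ G.verts
  ne : f ≠ g
  left_notMem : f ∉ G.E \ {e}
  right_notMem : g ∉ G.E \ {e}
  edges_eq : H.E = G.E \ {e} ∪ {f, g}
  inc_left : H.inc f = s(u, w)
  inc_right : H.inc g = s(w, v)
  inc_congr : ∀ a ∈ G.E \ {e}, H.inc a = G.inc a

open Classical in
/-- The edge map of a subdivision, sending the two new edges `f` and `g` to the edge `e` that they
subdivide. -/
noncomputable def subdividedEdge (e f g a : α) : α := if a = f ∨ a = g then e else a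

/-- Replaces the edge `e` by the sum of `f` and `g`, which is an isomorphism of cycle spaces when
`e` is subdivided into `f` and `g`. -/
noncomputable def subdivisionMap (e f g : α) : (α →₀ ZMod 2) →ₗ[ZMod 2] α →₀ ZMod 2 :=
  LinearMap.id +
    (Finsupp.lapply e).smulRight (Finsupp.single f 1 + Finsupp.single g 1 - Finsupp.single e 1)

lemma subdivisionMap_eq (e f g : α) (x : α →₀ ZMod 2) :
    subdivisionMap e f g x = x.erase e + x e • (Finsupp.single f 1 + Finsupp.single g 1) := by
  classical
  ext a
  simp only [subdivisionMap, LinearMap.add_apply, LinearMap.id_apply, LinearMap.smulRight_apply,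
    Finsupp.lapply_apply, Finsupp.add_apply, Finsupp.sub_apply, Finsupp.smul_apply,
    Finsupp.single_apply, Finsupp.erase_apply, smul_eq_mul]
  grind

namespace SubdividesAt

variable {G H : Graph V α} {e f g : α} {u v w : V}

lemma subdividedEdge_of_mem (h : SubdividesAt G H e f g u v w) {a : α} (ha : a ∈ G.E \ {e}) :
    subdividedEdge e f g a = a :=
  if_neg fun hfg => hfg.elim (fun hf => h.left_notMem (hf ▸ ha)) fun hg => h.right_notMem (hg ▸ ha)

lemma surjOn_subdividedEdge (h : SubdividesAt G H e f g u v w) :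
    Set.SurjOn (subdividedEdge e f g) H.E G.E := by
  intro a ha
  obtain rfl | hae := eq_or_ne a e
  · exact ⟨f, h.edges_eq ▸ .inr (.inl rfl), if_pos (.inl rfl)⟩
  · exact ⟨a, h.edges_eq ▸ .inl ⟨ha, hae⟩, h.subdividedEdge_of_mem ⟨ha, hae⟩⟩

open Classical in
lemma subdivisionMap_apply (h : SubdividesAt G H e f g u v w) {x : α →₀ ZMod 2}
    (hx : (x.support : Set α) ⊆ G.E) (a : α) :
    subdivisionMap e f g x a = if a ∈ H.E then x (subdividedEdge e f g a) else 0 := by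
  have hzero : ∀ b ∉ G.E, x b = 0 := fun b hb => Finsupp.notMem_support_iff.1 fun hbx => hb (hx hbx)
  have hf := h.left_notMem
  have hg := h.right_notMem
  have hfg := h.ne
  rw [subdivisionMap_eq, h.edges_eq]
  simp only [subdividedEdge, Finsupp.add_apply, Finsupp.smul_apply, Finsupp.single_apply,
    Finsupp.erase_apply, smul_eq_mul, Set.mem_union, Set.mem_sdiff, Set.mem_insert_iff,
    Set.mem_singleton_iff] at hf hg ⊢
  grind

lemma boundary_subdivisionMap (h : SubdividesAt G H e f g u v w) {x : α →₀ ZMod 2}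
    (hx : (x.support : Set α) ⊆ G.E) : H.boundary (subdivisionMap e f g x) = G.boundary x := by
  classical
  have herase : H.boundary (x.erase e) = G.boundary (x.erase e) := by
    refine boundary_congr fun a ha => h.inc_congr a ?_
    rw [Finsupp.support_erase, Finset.mem_erase] at ha
    exact ⟨hx ha.2, ha.1⟩
  have hpath : H.boundary (Finsupp.single f 1 + Finsupp.single g 1) =
      G.boundary (Finsupp.single e 1) := by
    rw [map_add, boundary_single h.inc_left, boundary_single h.inc_right,
      boundary_single h.inc_eq, add_assoc, ← add_assoc (Finsupp.single w 1), ← Finsupp.single_add,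
      CharTwo.add_self_eq_zero, Finsupp.single_zero, zero_add]
  rw [subdivisionMap_eq, map_add, map_smul, herase, hpath, ← map_smul, ← map_add,
    Finsupp.smul_single, smul_eq_mul, mul_one, Finsupp.erase_add_single]

lemma disjoint_ker_subdivisionMap (h : SubdividesAt G H e f g u v w) :
    Disjoint (Finsupp.supported (ZMod 2) (ZMod 2) G.E) (LinearMap.ker (subdivisionMap e f g)) := by
  classical
  refine LinearMap.disjoint_ker.2 fun x hx hx0 => ?_
  ext a
  by_contra ha
  obtain ⟨b, hb, rfl⟩ := h.surjOn_subdividedEdge (hx (Finsupp.mem_support_iff.2 ha))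
  have hxb := h.subdivisionMap_apply hx b
  rw [if_pos hb, hx0] at hxb
  exact ha hxb.symm

lemma apply_left_eq_apply_right (h : SubdividesAt G H e f g u v w) {y : α →₀ ZMod 2}
    (hy : y ∈ H.cycleSpace H.E) : y f = y g := by
  have hu : u ≠ w := fun huw => h.notMem_verts ⟨e, h.mem, by simp [h.inc_eq, huw]⟩
  have hv : v ≠ w := fun hvw => h.notMem_verts ⟨e, h.mem, by simp [h.inc_eq, hvw]⟩
  refine apply_eq_of_series h.ne h.inc_left h.inc_right hu hv ?_ hy
  rintro ⟨a, ⟨haH, hafg⟩, hwa⟩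
  obtain ha | ha := h.edges_eq ▸ haH
  · exact h.notMem_verts ⟨a, ha.1, h.inc_congr a ha ▸ hwa⟩
  · exact hafg ha

lemma exists_subdivisionMap_eq (h : SubdividesAt G H e f g u v w) {X : Set α} (hX : X ⊆ G.E)
    {y : α →₀ ZMod 2} (hy : y ∈ H.cycleSpace (H.E ∩ subdividedEdge e f g ⁻¹' X)) :
    ∃ x, (x.support : Set α) ⊆ X ∧ subdivisionMap e f g x = y := by
  classical
  have hyE := h.apply_left_eq_apply_right (cycleSpace_mono Set.inter_subset_left hy)
  have hsupp : ∀ a, y a ≠ 0 → a ∈ H.E ∧ subdividedEdge e f g a ∈ X :=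
    fun a ha => (mem_cycleSpace.1 hy).2 (Finsupp.mem_support_iff.2 ha)
  have hf := h.left_notMem
  have hg := h.right_notMem
  let x := (y.erase f).erase g + Finsupp.single e (y f)
  have hxsupp : (x.support : Set α) ⊆ X := by
    intro a ha
    simp only [x, Finset.mem_coe, Finsupp.mem_support_iff, Finsupp.add_apply, Finsupp.erase_apply,
      Finsupp.single_apply] at ha
    simp only [subdividedEdge] at hsupp
    grind
  refine ⟨x, hxsupp, ?_⟩
  ext a
  have hfg := h.ne
  rw [h.subdivisionMap_apply (hxsupp.trans hX)]
  simp only [h.edges_eq, x, Finsupp.add_apply, Finsupp.erase_apply, Finsupp.single_apply,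
    subdividedEdge, Set.mem_union, Set.mem_sdiff, Set.mem_insert_iff, Set.mem_singleton_iff]
    at hsupp hf hg ⊢
  clear hxsupp
  grind

lemma map_cycleSpace (h : SubdividesAt G H e f g u v w) {X : Set α} (hX : X ⊆ G.E) :
    (G.cycleSpace X).map (subdivisionMap e f g) =
      H.cycleSpace (H.E ∩ subdividedEdge e f g ⁻¹' X) := by
  classical
  ext y
  constructor
  · rintro ⟨x, hx, rfl⟩
    obtain ⟨hx0, hxX⟩ := mem_cycleSpace.1 hx
    refine mem_cycleSpace.2 ⟨(h.boundary_subdivisionMap (hxX.trans hX)).trans hx0, fun a ha => ?_⟩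
    rw [Finset.mem_coe, Finsupp.mem_support_iff, h.subdivisionMap_apply (hxX.trans hX),
      ite_ne_right_iff] at ha
    exact ⟨ha.1, hxX (Finsupp.mem_support_iff.2 ha.2)⟩
  · intro hy
    obtain ⟨x, hxX, rfl⟩ := h.exists_subdivisionMap_eq hX hy
    refine ⟨x, mem_cycleSpace.2 ⟨?_, hxX⟩, rfl⟩
    rw [← h.boundary_subdivisionMap (hxX.trans hX), (mem_cycleSpace.1 hy).1]

lemma cyclomaticNumber_preimage (h : SubdividesAt G H e f g u v w) {X : Set α} (hX : X ⊆ G.E) :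
    H.cyclomaticNumber (H.E ∩ subdividedEdge e f g ⁻¹' X) = G.cyclomaticNumber X := by
  rw [cyclomaticNumber, ← h.map_cycleSpace hX, ← LinearMap.range_domRestrict,
    LinearMap.finrank_range_of_inj, cyclomaticNumber]
  exact LinearMap.injective_domRestrict_iff.2 (h.disjoint_ker_subdivisionMap.mono_left
    (inf_le_right.trans (Finsupp.supported_mono hX)))

lemma isThetaPair (h : SubdividesAt G H e f g u v w) {A B : Set α} (hAB : G.IsThetaPair A B) :
    H.IsThetaPair (H.E ∩ subdividedEdge e f g ⁻¹' A) (H.E ∩ subdividedEdge e f g ⁻¹' B) where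
  left_subset := Set.inter_subset_left
  right_subset := Set.inter_subset_left
  left_pos := h.cyclomaticNumber_preimage hAB.left_subset ▸ hAB.left_pos
  right_pos := h.cyclomaticNumber_preimage hAB.right_subset ▸ hAB.right_pos
  union_le := by
    rw [← Set.inter_union_distrib_left, ← Set.preimage_union,
      h.cyclomaticNumber_preimage (Set.union_subset hAB.left_subset hAB.right_subset)]
    exact hAB.union_le

lemma hasOpposedThetaPairs (h : SubdividesAt G H e f g u v w) (hG : G.HasOpposedThetaPairs) :
    H.HasOpposedThetaPairs := by
  obtain ⟨A, B, C, D, hAB, hCD, hdisj, hforest⟩ := hG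
  refine ⟨_, _, _, _, h.isThetaPair hAB, h.isThetaPair hCD, ?_, ?_⟩ <;>
    simp only [← Set.inter_inter_distrib_left, ← Set.preimage_inter]
  · exact (hdisj.preimage _).mono Set.inter_subset_right Set.inter_subset_right
  · rw [← Set.inter_union_distrib_left, ← Set.preimage_union, h.cyclomaticNumber_preimage, hforest]
    exact Set.union_subset (Set.inter_subset_left.trans hAB.left_subset)
      (Set.inter_subset_left.trans hCD.left_subset)

lemma finite_edges (h : SubdividesAt G H e f g u v w) (hG : G.E.Finite) : H.E.Finite :=
  h.edges_eq ▸ hG.sdiff.union (Set.toFinite _)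

end SubdividesAt

end Graph

section Subdivisions

variable {V α : Type u} {G H : Graph V α}

lemma ElemSub.exists_subdividesAt (h : ElemSub G H) :
    ∃ e f g u v w, G.SubdividesAt H e f g u v w := by
  obtain ⟨e, he, f, g, u, v, w, hinc, hw, hfg, hf, hg, hE, hincf, hincg, hcongr⟩ := h
  exact ⟨e, f, g, u, v, w, ⟨he, hinc, hw, hfg, hf, hg, hE, hincf, hincg, hcongr⟩⟩

lemma IsSubdivision.finite_edges (h : IsSubdivision G H) (hG : G.E.Finite) : H.E.Finite := by
  induction h with
  | refl => exact hG
  | tail _ hsub ih =>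
    obtain ⟨e, f, g, u, v, w, hsub⟩ := hsub.exists_subdividesAt
    exact hsub.finite_edges ih

lemma IsSubdivision.hasOpposedThetaPairs (h : IsSubdivision G H) (hG : G.HasOpposedThetaPairs) :
    H.HasOpposedThetaPairs := by
  induction h with
  | refl => exact hG
  | tail _ hsub ih =>
    obtain ⟨e, f, g, u, v, w, hsub⟩ := hsub.exists_subdividesAt
    exact hsub.hasOpposedThetaPairs ih

end Subdivisions

/-! ### The complete graph on four vertices -/

section CompleteGraph

variable {V α : Type u} {K : Graph V α}

/-- The edges of the standard complete graph on the vertex set `Fin 4`. -/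
abbrev K4Edge := {p : Sym2 (Fin 4) // ¬ p.IsDiag}

/-- The edge set of the triangle of `K₄` that avoids the vertex `i`. -/
def triangleAvoiding (i : Fin 4) : Finset K4Edge := {p | i ∉ p.1}

lemma card_triangleAvoiding (i : Fin 4) : (triangleAvoiding i).card = 3 := by decide +revert

/-- The data of `IsK4 K` named: the vertices `v i` of `K` and its edges `ed p`. -/
structure Graph.IsK4Labelling (K : Graph V α) (v : Fin 4 → V) (ed : K4Edge → α) : Prop where
  injective_vert : Function.Injective v
  injective_edge : Function.Injective ed
  edges_eq : K.E = Set.range ed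
  inc_eq : ∀ p, K.inc (ed p) = Sym2.map v p.1

namespace Graph.IsK4Labelling

variable {v : Fin 4 → V} {ed : K4Edge → α}

lemma image_subset (h : K.IsK4Labelling v ed) (S : Set K4Edge) : ed '' S ⊆ K.E :=
  h.edges_eq ▸ Set.image_subset_range ed S

lemma cyclomaticNumber_triangle_pos (h : K.IsK4Labelling v ed) (i : Fin 4) :
    0 < K.cyclomaticNumber (ed '' triangleAvoiding i) := by
  refine (cyclomaticNumber_pos (Set.toFinite _)).2 fun hbot => ?_
  have hlt : (ed '' triangleAvoiding i).ncard < (v '' {i}ᶜ).ncard := by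
    refine ncard_lt_ncard_of_cycleSpace_eq_bot (Set.toFinite _) ?_ ?_ hbot
    · exact (Set.nonempty_compl_of_nontrivial i).image v
    · rintro _ ⟨_, ⟨p, hp, rfl⟩, ha⟩
      rw [h.inc_eq, Sym2.mem_map] at ha
      obtain ⟨j, hj, rfl⟩ := ha
      refine Set.mem_image_of_mem v ?_
      rintro rfl
      exact (Finset.mem_filter.1 hp).2 hj
  rw [Set.ncard_image_of_injective _ h.injective_edge, Set.ncard_coe_finset,
    Set.ncard_image_of_injective _ h.injective_vert, card_triangleAvoiding, Set.ncard_compl,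
    Set.ncard_singleton, Nat.card_fin] at hlt
  omega

lemma cyclomaticNumber_image_eq_zero (h : K.IsK4Labelling v ed) {S : Finset K4Edge}
    (hS : ∀ p ∈ S, ∃ i ∈ p.1, ∀ q ∈ S, i ∈ q.1 → q = p) :
    K.cyclomaticNumber (ed '' S) = 0 := by
  refine (cyclomaticNumber_eq_zero (Set.toFinite _)).2 (cycleSpace_eq_bot_of_forall_leaf ?_)
  rintro _ ⟨p, hp, rfl⟩
  obtain ⟨i, ⟨j, hij⟩, hleaf⟩ := hS p hp
  refine ⟨v j, v i, ?_, ?_, ?_⟩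
  · rw [h.inc_eq, hij, Sym2.map_mk, Sym2.eq_swap]
  · refine h.injective_vert.ne ?_
    rintro rfl
    exact p.2 (hij ▸ Sym2.mk_isDiag_iff.2 rfl)
  · rintro _ ⟨q, hq, rfl⟩ hiq
    rw [h.inc_eq, Sym2.mem_map] at hiq
    obtain ⟨k, hk, hki⟩ := hiq
    rw [hleaf q hq (h.injective_vert hki ▸ hk)]

/-- Deleting from the union of two triangles the two edges that avoid a common vertex `l` of the
triangles leaves a star at `l`. -/
lemma cyclomaticNumber_triangle_union_le (h : K.IsK4Labelling v ed) {i j : Fin 4} (hij : i ≠ j) :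
    K.cyclomaticNumber (ed '' triangleAvoiding i ∪ ed '' triangleAvoiding j) ≤ 2 := by
  obtain ⟨l, hli, hlj⟩ : ∃ l, l ≠ i ∧ l ≠ j := by decide +revert
  let U := triangleAvoiding i ∪ triangleAvoiding j
  let F := U ∩ triangleAvoiding l
  have hF : F.card = 2 := by decide +revert
  have hstar : ∀ p ∈ U \ F, ∃ k ∈ p.1, ∀ q ∈ U \ F, k ∈ q.1 → q = p := by decide +revert
  have hle := cyclomaticNumber_le_add_ncard (G := K) (Set.toFinite (ed '' U))
    (Set.toFinite (ed '' F))
  rw [← Set.image_sdiff h.injective_edge, ← Finset.coe_sdiff,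
    h.cyclomaticNumber_image_eq_zero hstar, Set.ncard_image_of_injective _ h.injective_edge,
    Set.ncard_coe_finset, hF] at hle
  rwa [← Set.image_union, ← Finset.coe_union]

lemma isThetaPair (h : K.IsK4Labelling v ed) {i j : Fin 4} (hij : i ≠ j) :
    K.IsThetaPair (ed '' triangleAvoiding i) (ed '' triangleAvoiding j) where
  left_subset := h.image_subset _
  right_subset := h.image_subset _
  left_pos := h.cyclomaticNumber_triangle_pos i
  right_pos := h.cyclomaticNumber_triangle_pos j
  union_le := h.cyclomaticNumber_triangle_union_le hij

lemma hasOpposedThetaPairs (h : K.IsK4Labelling v ed) : K.HasOpposedThetaPairs := by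
  refine ⟨_, _, _, _, h.isThetaPair (i := 0) (j := 1) (by decide),
    h.isThetaPair (i := 2) (j := 3) (by decide), ?_, ?_⟩ <;>
    simp only [← Set.image_inter h.injective_edge, ← Set.image_union, ← Finset.coe_inter,
      ← Finset.coe_union]
  · rw [Set.disjoint_image_iff h.injective_edge, Finset.disjoint_coe]
    decide
  · exact h.cyclomaticNumber_image_eq_zero (by decide)

end Graph.IsK4Labelling

lemma IsK4.exists_isK4Labelling (h : IsK4 K) : ∃ v ed, K.IsK4Labelling v ed := by
  obtain ⟨v, hv, ed, hed, hE, hinc⟩ := h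
  exact ⟨v, ed, hv, hed, hE, hinc⟩

lemma IsK4.finite_edges (h : IsK4 K) : K.E.Finite := by
  obtain ⟨v, ed, hK⟩ := h.exists_isK4Labelling
  exact hK.edges_eq ▸ Set.finite_range ed

lemma IsK4.hasOpposedThetaPairs (h : IsK4 K) : K.HasOpposedThetaPairs := by
  obtain ⟨v, ed, hK⟩ := h.exists_isK4Labelling
  exact hK.hasOpposedThetaPairs

end CompleteGraph

theorem statement_8 {V α : Type u} (K H : Graph V α) (hK : IsK4 K)
    (hsub : IsSubdivision K H) (N : Matroid α) (hN : IsGraphicRep H N) :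
    ¬ IsBicircularLift N :=
  (hsub.hasOpposedThetaPairs hK.hasOpposedThetaPairs).not_isBicircularLift
    (hsub.finite_edges hK.finite_edges) hN

end BLFormal
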